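/- If G is a gap-free and claw-free finite simple graph, then reg I(G) ≤ 3. -/

import Mathlib

/-!
The bound rests on one exact sequence. If `J ⊆ P` are ideals and the variable `x` is a
nonzerodivisor modulo `J`, then `0 → J(-1) → J ⊕ P(-1) → J + xP → 0`, with maps `c ↦ (xc, c)` and
`(a, b) ↦ a - xb`, is exact. Lifting the first map to graded free resolutions and taking the mapping
cone gives `reg (J + xP) ≤ max (reg J) (reg P + 1)` (`HasReg.cone`); no minimality of the
resolutions is needed, because only an upper bound on the degrees of generators is claimed.

For a vertex `x` of `G`, the edge ideal is `I(G) = I(G - x) + x P`, where `P` is generated by the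
neighbours of `x` and the edges of `G - N[x]`. Adjoining new variables to an ideal is again of the
form `J + y S`, so it does not raise a regularity bound that is at least `1`. Hence
`reg I(G) ≤ max (reg I(G - x)) (reg I(G - N[x]) + 1)` (`HasReg.split_vertex`, for bounds that are
at least `2`).

Let `G` be gap-free and claw-free and let `xz` be an edge. Among the vertices outside `N[x]`, those
not adjacent to `z` are independent, since an edge between them would form a gap with `xz`; those
adjacent to `z` form a clique, since two nonadjacent ones would form a claw with `z` and `x`. So
`G - N[x]` is a split graph. Edge ideals of split graphs have regularity at most `2`
(`hasReg_of_split`): removing a vertex `b` of the clique leaves a split graph, and removing `N[b]`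
leaves an independent set. Therefore `reg I(G) ≤ max (reg I(G - x)) 3`, and the theorem follows by
induction on the set of vertices.

Homogeneity is handled through the predicate `DegIn δ T w`, which says that the element `w` of a
graded free module is supported in the set of degrees `T`. A map is degree-preserving when it
respects all of these predicates; applying this to `{k}` and to its complement produces homogeneous
preimages of homogeneous elements.
-/

open MvPolynomial

/-- The edge ideal `I(G)` of a finite simple graph `G` on vertex set `{x_1, ..., x_n}`:
the ideal of `S = K[x_1, ..., x_n]` generated by the monomials `x_i * x_j` for the
edges `{x_i, x_j}` of `G`. -/
noncomputable def edgeIdeal (K : Type) [Field K] {n : ℕ} (G : SimpleGraph (Fin n)) :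
    Ideal (MvPolynomial (Fin n) K) :=
  Ideal.span { m | ∃ i j, G.Adj i j ∧ m = X i * X j }

/-- A finite graded free resolution of an ideal `I` of the polynomial ring
`S = K[x_1, ..., x_n]`.  The `i`-th free module is `F i = ⨁_a S(-shift i a)`,
realized as `Fin (rank i) → S`; the differentials and the augmentation `F 0 → I ⊆ S`
are degree-preserving (each matrix entry is homogeneous of the appropriate degree),
and the complex `0 → F len → ⋯ → F 1 → F 0 → I → 0` is exact. -/
structure GradedFreeRes {n : ℕ} (K : Type) [Field K]
    (I : Ideal (MvPolynomial (Fin n) K)) where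
  len : ℕ
  rank : ℕ → ℕ
  rank_zero : ∀ i, len < i → rank i = 0
  shift : (i : ℕ) → Fin (rank i) → ℕ
  d : (i : ℕ) →
    ((Fin (rank (i + 1)) → MvPolynomial (Fin n) K) →ₗ[MvPolynomial (Fin n) K]
      (Fin (rank i) → MvPolynomial (Fin n) K))
  aug : (Fin (rank 0) → MvPolynomial (Fin n) K) →ₗ[MvPolynomial (Fin n) K]
      MvPolynomial (Fin n) K
  aug_range : LinearMap.range aug = I
  exact_zero : LinearMap.ker aug = LinearMap.range (d 0)
  exact_succ : ∀ i, LinearMap.ker (d i) = LinearMap.range (d (i + 1))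
  homog_aug : ∀ a, (aug (Pi.single a 1)).IsHomogeneous (shift 0 a)
  homog_d : ∀ i (b : Fin (rank (i + 1))) (a : Fin (rank i)),
    d i (Pi.single b 1) a = 0 ∨
      ∃ e, shift (i + 1) b = shift i a + e ∧ (d i (Pi.single b 1) a).IsHomogeneous e

/-- The Castelnuovo–Mumford regularity of an ideal `I ⊆ K[x_1, ..., x_n]`:
the least integer `r` such that `I` admits a (finite) graded free resolution whose
`i`-th free module is generated in degrees `≤ r + i`.  The minimum is attained by the
minimal graded free resolution, so this agrees with the usual definition
`reg I = max { j - i : β_{i,j}(I) ≠ 0 }`. -/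
noncomputable def reg {n : ℕ} (K : Type) [Field K]
    (I : Ideal (MvPolynomial (Fin n) K)) : ℤ :=
  sInf { r : ℤ | ∃ F : GradedFreeRes K I,
    ∀ i, ∀ a : Fin (F.rank i), (F.shift i a : ℤ) - (i : ℤ) ≤ r }

/-- Two disjoint edges `uv` and `xy` of `G` form a gap if `G` has no edge with one
endpoint in `{u, v}` and the other in `{x, y}`; `G` is gap-free if no two of its
edges form a gap. -/
def GapFree {V : Type} (G : SimpleGraph V) : Prop :=
  ¬ ∃ u v x y, G.Adj u v ∧ G.Adj x y ∧ u ≠ x ∧ u ≠ y ∧ v ≠ x ∧ v ≠ y ∧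
    ¬ G.Adj u x ∧ ¬ G.Adj u y ∧ ¬ G.Adj v x ∧ ¬ G.Adj v y

/-- `G` is `m`-claw-free: `G` has no induced subgraph isomorphic to the complete
bipartite graph `K_{1,m}` (an `m`-claw). -/
def ClawFree (m : ℕ) {V : Type} (G : SimpleGraph V) : Prop :=
  IsEmpty (completeBipartiteGraph (Fin 1) (Fin m) ↪g G)

/-! ### Graded free modules and degree-preserving maps -/

section Graded

variable {n : ℕ} {K : Type} [Field K]

/-- For the graded free module `⨁_b S(-δ b)`, realized as `ι → S`: all graded components of `w`
outside the set of degrees `T` vanish. -/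
def DegIn {ι : Type} (δ : ι → ℕ) (T : Set ℕ) (w : ι → MvPolynomial (Fin n) K) : Prop :=
  ∀ b m, coeff m (w b) ≠ 0 → m.degree + δ b ∈ T

/-- A linear map of graded free modules preserving degrees, expressed by its compatibility with
every set of degrees at once. -/
def HomMap {ι κ : Type} (δ : ι → ℕ) (θ : κ → ℕ)
    (f : (ι → MvPolynomial (Fin n) K) →ₗ[MvPolynomial (Fin n) K]
      (κ → MvPolynomial (Fin n) K)) : Prop :=
  ∀ T w, DegIn δ T w → DegIn θ T (f w)

variable {ι κ τ : Type} {δ : ι → ℕ} {θ : κ → ℕ} {T : Set ℕ}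

lemma DegIn.zero : DegIn δ T (0 : ι → MvPolynomial (Fin n) K) := by
  intro b m h
  simp at h

lemma DegIn.add {v w : ι → MvPolynomial (Fin n) K} (hv : DegIn δ T v) (hw : DegIn δ T w) :
    DegIn δ T (v + w) := by
  intro b m h
  by_cases h1 : coeff m (v b) = 0
  · exact hw b m (by simpa [h1] using h)
  · exact hv b m h1

lemma DegIn.neg {v : ι → MvPolynomial (Fin n) K} (hv : DegIn δ T v) : DegIn δ T (-v) := by
  intro b m h
  exact hv b m (by simpa using h)

lemma DegIn.sum {α : Type} (s : Finset α) (w : α → ι → MvPolynomial (Fin n) K)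
    (h : ∀ a ∈ s, DegIn δ T (w a)) : DegIn δ T (∑ a ∈ s, w a) :=
  Finset.sum_induction _ _ (fun _ _ => DegIn.add) DegIn.zero h

lemma exists_coeff_ne_zero_of_mul {p q : MvPolynomial (Fin n) K} {m : Fin n →₀ ℕ}
    (h : coeff m (p * q) ≠ 0) :
    ∃ m₁ m₂, m = m₁ + m₂ ∧ coeff m₁ p ≠ 0 ∧ coeff m₂ q ≠ 0 := by
  rw [coeff_mul] at h
  obtain ⟨⟨m₁, m₂⟩, hm, h⟩ := Finset.exists_ne_zero_of_sum_ne_zero h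
  exact ⟨m₁, m₂, (Finset.HasAntidiagonal.mem_antidiagonal.1 hm).symm, left_ne_zero_of_mul h,
    right_ne_zero_of_mul h⟩

lemma DegIn.X_smul {w : ι → MvPolynomial (Fin n) K} (x : Fin n)
    (hw : DegIn (fun b => δ b + 1) T w) :
    DegIn δ T ((X x : MvPolynomial (Fin n) K) • w) := by
  intro b m h
  obtain ⟨m₁, m₂, rfl, h1, h2⟩ := exists_coeff_ne_zero_of_mul h
  have h3 : Finsupp.single x 1 = m₁ := by
    by_contra h3
    exact h1 (by rw [coeff_X, if_neg h3])
  subst h3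
  have := hw b m₂ h2
  convert this using 1
  simp only [map_add, Finsupp.degree_single]
  omega

lemma degIn_single [DecidableEq ι] (b : ι) :
    DegIn δ {δ b} (Pi.single b (1 : MvPolynomial (Fin n) K)) := by
  intro c m h
  by_cases hc : c = b
  · subst hc
    have h0 : (0 : Fin n →₀ ℕ) = m := by
      by_contra h0
      exact h (by rw [Pi.single_eq_same, coeff_one, if_neg h0])
    subst h0
    simp
  · simp [Pi.single_eq_of_ne hc] at h

/-- A linear map is degree-preserving as soon as it sends each basis vector to a homogeneous
element of the right degree. -/
lemma HomMap.of_single [Fintype ι] [DecidableEq ι]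
    {f : (ι → MvPolynomial (Fin n) K) →ₗ[MvPolynomial (Fin n) K] (κ → MvPolynomial (Fin n) K)}
    (h : ∀ b, DegIn θ {δ b} (f (Pi.single b 1))) : HomMap δ θ f := by
  intro T w hw
  have : f w = ∑ b, w b • f (Pi.single b 1) := by
    conv_lhs => rw [pi_eq_sum_univ' w]
    rw [map_sum]
    refine Finset.sum_congr rfl fun b _ => ?_
    rw [← map_smul]
  rw [this]
  refine DegIn.sum _ _ fun b _ a m hm => ?_
  obtain ⟨m₁, m₂, rfl, h1, h2⟩ := exists_coeff_ne_zero_of_mul hm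
  have h3 := h b a m₂ h2
  have h4 := hw b m₁ h1
  rw [Set.mem_singleton_iff] at h3
  rw [map_add, add_assoc, h3]
  exact h4

lemma HomMap.comp {ρ : τ → ℕ}
    {g : (κ → MvPolynomial (Fin n) K) →ₗ[MvPolynomial (Fin n) K] (τ → MvPolynomial (Fin n) K)}
    {f : (ι → MvPolynomial (Fin n) K) →ₗ[MvPolynomial (Fin n) K] (κ → MvPolynomial (Fin n) K)}
    (hg : HomMap θ ρ g) (hf : HomMap δ θ f) : HomMap δ ρ (g ∘ₗ f) :=
  fun T w hw => hg T _ (hf T w hw)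

/-- Twisting source and target by `-1`. -/
lemma HomMap.shift
    {f : (ι → MvPolynomial (Fin n) K) →ₗ[MvPolynomial (Fin n) K] (κ → MvPolynomial (Fin n) K)}
    (hf : HomMap δ θ f) : HomMap (fun b => δ b + 1) (fun a => θ a + 1) f :=
  fun T w hw => hf {t | t + 1 ∈ T} w hw

/-- The component of degree `k` splits off. -/
lemma exists_degIn_add (δ : ι → ℕ) (k : ℕ) (w : ι → MvPolynomial (Fin n) K) :
    ∃ u v, w = u + v ∧ DegIn δ {k} u ∧ DegIn δ {k}ᶜ v := by
  let u : ι → MvPolynomial (Fin n) K := fun b =>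
    if δ b ≤ k then homogeneousComponent (k - δ b) (w b) else 0
  have hu : ∀ b m, coeff m (u b) = if m.degree + δ b = k then coeff m (w b) else 0 := by
    intro b m
    simp only [u]
    split_ifs with h1 h2 h2
    · rw [coeff_homogeneousComponent, if_pos (by omega)]
    · rw [coeff_homogeneousComponent, if_neg (by omega)]
    · omega
    · simp
  refine ⟨u, w - u, by simp, fun b m h => ?_, fun b m h => ?_⟩
  · rw [hu] at h
    by_contra h'
    exact h (if_neg h')
  · rw [Pi.sub_apply, coeff_sub, hu] at h
    intro h'
    exact h (by rw [if_pos (by simpa using h'), sub_self])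

/-- A homogeneous element of the image of a degree-preserving map has a homogeneous preimage of
the same degree. -/
lemma HomMap.exists_preimage
    {f : (ι → MvPolynomial (Fin n) K) →ₗ[MvPolynomial (Fin n) K] (κ → MvPolynomial (Fin n) K)}
    (hf : HomMap δ θ f) {k : ℕ} {w : ι → MvPolynomial (Fin n) K} (hw : DegIn θ {k} (f w)) :
    ∃ u, DegIn δ {k} u ∧ f u = f w := by
  obtain ⟨u, v, rfl, hu, hv⟩ := exists_degIn_add δ k w
  refine ⟨u, hu, ?_⟩
  -- `f v` is concentrated in degree `k` and, at the same time, has no component of degree `k`.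
  have h1 : DegIn θ {k} (f v) := by
    have := hw.add (hf _ _ hu).neg
    rwa [map_add, add_comm (f u), add_neg_cancel_right] at this
  have h2 := hf _ _ hv
  have h3 : f v = 0 := by
    ext b m
    by_contra h
    exact h2 b m h (h1 b m h)
  rw [map_add, h3, add_zero]

/-- Graded free modules are projective with respect to degree-preserving maps. -/
lemma HomMap.exists_lift [Fintype ι] {ρ : τ → ℕ}
    {f : (ι → MvPolynomial (Fin n) K) →ₗ[MvPolynomial (Fin n) K] (τ → MvPolynomial (Fin n) K)}
    {g : (κ → MvPolynomial (Fin n) K) →ₗ[MvPolynomial (Fin n) K] (τ → MvPolynomial (Fin n) K)}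
    (hf : HomMap δ ρ f) (hg : HomMap θ ρ g) (h : ∀ w, ∃ u, g u = f w) :
    ∃ φ : (ι → MvPolynomial (Fin n) K) →ₗ[MvPolynomial (Fin n) K]
      (κ → MvPolynomial (Fin n) K), HomMap δ θ φ ∧ ∀ w, g (φ w) = f w := by
  classical
  have h1 : ∀ b, ∃ u, DegIn θ {δ b} u ∧ g u = f (Pi.single b 1) := by
    intro b
    obtain ⟨u, hu⟩ := h (Pi.single b 1)
    obtain ⟨v, hv, hv'⟩ := hg.exists_preimage (w := u) (k := δ b)
      (by rw [hu]; exact hf _ _ (degIn_single b))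
    exact ⟨v, hv, hv'.trans hu⟩
  choose v hv hv' using h1
  let φ := (Pi.basisFun (MvPolynomial (Fin n) K) ι).constr (MvPolynomial (Fin n) K) v
  have hφ : ∀ b, φ (Pi.single b 1) = v b := by
    intro b
    have := (Pi.basisFun (MvPolynomial (Fin n) K) ι).constr_basis (MvPolynomial (Fin n) K) v b
    rwa [Pi.basisFun_apply] at this
  refine ⟨φ, HomMap.of_single fun b => by rw [hφ]; exact hv b, fun w => ?_⟩
  have : g ∘ₗ φ = f := by
    refine (Pi.basisFun (MvPolynomial (Fin n) K) ι).ext fun b => ?_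
    rw [Pi.basisFun_apply, LinearMap.comp_apply, hφ, hv']
  rw [← this, LinearMap.comp_apply]

end Graded

/-! ### Graded free resolutions over arbitrary finite index types -/

section Resolutions

variable {n : ℕ} {K : Type} [Field K]

/-- A finite graded free resolution of the ideal `I`, with bases indexed by arbitrary finite types.
The augmentation takes values in `Unit → S`, a graded free module of rank one, so that it is a map
of the same kind as the differentials. -/
structure Res (I : Ideal (MvPolynomial (Fin n) K)) where
  ι : ℕ → Type
  fin : ∀ i, Fintype (ι i)
  len : ℕ
  empty : ∀ i, len < i → IsEmpty (ι i)
  deg : ∀ i, ι i → ℕ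
  d : ∀ i, (ι (i + 1) → MvPolynomial (Fin n) K) →ₗ[MvPolynomial (Fin n) K]
    (ι i → MvPolynomial (Fin n) K)
  aug : (ι 0 → MvPolynomial (Fin n) K) →ₗ[MvPolynomial (Fin n) K]
    (Unit → MvPolynomial (Fin n) K)
  aug_range : ∀ f, (∃ w, aug w = f) ↔ f () ∈ I
  exact_zero : ∀ w, aug w = 0 ↔ ∃ u, d 0 u = w
  exact_succ : ∀ i w, d i w = 0 ↔ ∃ u, d (i + 1) u = w
  hom_aug : HomMap (deg 0) (fun _ => 0) aug
  hom_d : ∀ i, HomMap (deg (i + 1)) (deg i) (d i)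

attribute [instance] Res.fin

/-- `reg I ≤ r`, in terms of `Res`: some graded free resolution of `I` has its `i`-th module
generated in degrees at most `r + i`. -/
def HasReg (I : Ideal (MvPolynomial (Fin n) K)) (r : ℕ) : Prop :=
  ∃ F : Res I, ∀ i a, F.deg i a ≤ r + i

lemma HasReg.mono {I : Ideal (MvPolynomial (Fin n) K)} {r s : ℕ} (h : HasReg I r) (hrs : r ≤ s) :
    HasReg I s := by
  obtain ⟨F, hF⟩ := h
  exact ⟨F, fun i a => (hF i a).trans (by omega)⟩

lemma Res.d_d {I : Ideal (MvPolynomial (Fin n) K)} (F : Res I) (i : ℕ)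
    (w : F.ι (i + 2) → MvPolynomial (Fin n) K) : F.d i (F.d (i + 1) w) = 0 :=
  (F.exact_succ i _).2 ⟨w, rfl⟩

lemma Res.aug_d {I : Ideal (MvPolynomial (Fin n) K)} (F : Res I)
    (w : F.ι 1 → MvPolynomial (Fin n) K) : F.aug (F.d 0 w) = 0 :=
  (F.exact_zero _).2 ⟨w, rfl⟩

lemma hasReg_bot : HasReg (⊥ : Ideal (MvPolynomial (Fin n) K)) 0 := by
  refine ⟨{
    ι := fun _ => PEmpty
    fin := fun _ => inferInstance
    len := 0
    empty := fun _ _ => inferInstance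
    deg := fun _ a => a.elim
    d := fun _ => 0
    aug := 0
    aug_range := fun f => ?_
    exact_zero := fun w => ⟨fun _ => ⟨0, Subsingleton.elim _ _⟩, fun _ => rfl⟩
    exact_succ := fun i w => ⟨fun _ => ⟨0, Subsingleton.elim _ _⟩, fun _ => rfl⟩
    hom_aug := fun T w _ => DegIn.zero
    hom_d := fun i T w _ => DegIn.zero }, fun i a => a.elim⟩
  constructor
  · rintro ⟨w, rfl⟩
    simp
  · intro h
    exact ⟨0, funext fun _ => ((Submodule.mem_bot _).1 h).symm⟩

/-- The basis of the resolution `0 → S → S` of the unit ideal. -/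
def topIndex : ℕ → Type
  | 0 => Unit
  | _ + 1 => PEmpty

lemma hasReg_top : HasReg (⊤ : Ideal (MvPolynomial (Fin n) K)) 0 := by
  have hE : ∀ i, IsEmpty (topIndex (i + 1)) := fun i => inferInstanceAs (IsEmpty PEmpty)
  refine ⟨{
    ι := topIndex
    fin := fun i => match i with
      | 0 => inferInstanceAs (Fintype Unit)
      | _ + 1 => inferInstanceAs (Fintype PEmpty)
    len := 0
    empty := fun i hi => match i, hi with
      | i + 1, _ => hE i
    deg := fun _ _ => 0
    d := fun _ => 0
    aug := LinearMap.id
    aug_range := fun f => ⟨fun _ => trivial, fun _ => ⟨f, rfl⟩⟩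
    exact_zero := fun w => ⟨fun h => ⟨0, h.symm⟩, fun ⟨_, h⟩ => h.symm⟩
    exact_succ := fun i w => ⟨fun _ => ⟨0, funext fun a => (hE i).elim a⟩, fun _ => rfl⟩
    hom_aug := fun T w h => h
    hom_d := fun i T w _ => DegIn.zero }, fun i a => Nat.zero_le _⟩

/-- An inclusion of ideals lifts to a degree-preserving chain map of resolutions. -/
lemma Res.exists_chainMap {I J : Ideal (MvPolynomial (Fin n) K)} (F : Res I) (H : Res J)
    (hIJ : I ≤ J) :
    ∃ φ : ∀ i, (F.ι i → MvPolynomial (Fin n) K) →ₗ[MvPolynomial (Fin n) K]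
      (H.ι i → MvPolynomial (Fin n) K),
      (∀ i, HomMap (F.deg i) (H.deg i) (φ i)) ∧ (∀ w, H.aug (φ 0 w) = F.aug w) ∧
      ∀ i w, H.d i (φ (i + 1) w) = φ i (F.d i w) := by
  -- The condition that allows the construction to continue beyond degree `i`.
  let Good (i : ℕ) (f : (F.ι i → MvPolynomial (Fin n) K) →ₗ[MvPolynomial (Fin n) K]
      (H.ι i → MvPolynomial (Fin n) K)) : Prop :=
    HomMap (F.deg i) (H.deg i) f ∧ ∀ w, ∃ u, H.d i u = f (F.d i w)
  obtain ⟨φ₀, h0, h0'⟩ := HomMap.exists_lift F.hom_aug H.hom_aug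
    (fun w => (H.aug_range _).2 (hIJ ((F.aug_range _).1 ⟨w, rfl⟩)))
  have hg0 : Good 0 φ₀ :=
    ⟨h0, fun w => (H.exact_zero _).1 (by rw [h0', F.aug_d])⟩
  have step : ∀ i (f : {f // Good i f}), ∃ g : {g // Good (i + 1) g},
      ∀ w, H.d i (g.1 w) = f.1 (F.d i w) := by
    rintro i ⟨f, hf, hf'⟩
    obtain ⟨g, hg, hg'⟩ := HomMap.exists_lift (hf.comp (F.hom_d i)) (H.hom_d i) hf'
    refine ⟨⟨g, hg, fun w => (H.exact_succ i _).1 ?_⟩, hg'⟩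
    rw [hg', LinearMap.comp_apply, F.d_d, map_zero]
  choose next hnext using step
  let φ : ∀ i, {f // Good i f} := fun i => Nat.rec ⟨φ₀, hg0⟩ (fun i f => next i f) i
  exact ⟨fun i => (φ i).1, fun i => (φ i).2.1, h0', fun i w => hnext i (φ i) w⟩

/-! ### The mapping cone -/

/-- The indices of a resolution, moved up by one place. -/
abbrev Prev (ι : ℕ → Type) : ℕ → Type
  | 0 => PEmpty
  | i + 1 => ι i

/-- The linear map into a free module on a disjoint union given by its two components. -/
noncomputable def elimL {M ι κ : Type} [AddCommGroup M] [Module (MvPolynomial (Fin n) K) M]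
    (f : M →ₗ[MvPolynomial (Fin n) K] (ι → MvPolynomial (Fin n) K))
    (g : M →ₗ[MvPolynomial (Fin n) K] (κ → MvPolynomial (Fin n) K)) :
    M →ₗ[MvPolynomial (Fin n) K] (ι ⊕ κ → MvPolynomial (Fin n) K) where
  toFun m := Sum.elim (f m) (g m)
  map_add' m m' := by
    ext (i | i) <;> simp
  map_smul' c m := by
    ext (i | i) <;> simp

/-- The differential of the resolution moved up by one place, with its sign changed. -/
noncomputable def Res.prevD {I : Ideal (MvPolynomial (Fin n) K)} (F : Res I) :
    ∀ i, (F.ι i → MvPolynomial (Fin n) K) →ₗ[MvPolynomial (Fin n) K]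
      (Prev F.ι i → MvPolynomial (Fin n) K)
  | 0 => 0
  | i + 1 => -F.d i

/-- The degrees of the generators of the resolution, moved up by one place and twisted by `-1`. -/
def Res.prevDeg {I : Ideal (MvPolynomial (Fin n) K)} (F : Res I) : ∀ i, Prev F.ι i → ℕ
  | 0 => fun _ => 0
  | i + 1 => fun a => F.deg i a + 1

/-- The differential of the mapping cone of `(x, φ) : F(-1) → F ⊕ H(-1)`. -/
noncomputable def coneD {I J : Ideal (MvPolynomial (Fin n) K)} (F : Res I) (H : Res J) (x : Fin n)
    (φ : ∀ i, (F.ι i → MvPolynomial (Fin n) K) →ₗ[MvPolynomial (Fin n) K]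
      (H.ι i → MvPolynomial (Fin n) K)) (i : ℕ) :
    ((F.ι (i + 1) ⊕ H.ι (i + 1)) ⊕ Prev F.ι (i + 1) → MvPolynomial (Fin n) K) →ₗ[MvPolynomial (Fin n) K]
      ((F.ι i ⊕ H.ι i) ⊕ Prev F.ι i → MvPolynomial (Fin n) K) :=
  let a := LinearMap.funLeft (MvPolynomial (Fin n) K) (MvPolynomial (Fin n) K)
    (fun j : F.ι (i + 1) => (Sum.inl (Sum.inl j) : (F.ι (i + 1) ⊕ H.ι (i + 1)) ⊕ Prev F.ι (i + 1)))
  let b := LinearMap.funLeft (MvPolynomial (Fin n) K) (MvPolynomial (Fin n) K)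
    (fun j : H.ι (i + 1) => (Sum.inl (Sum.inr j) : (F.ι (i + 1) ⊕ H.ι (i + 1)) ⊕ Prev F.ι (i + 1)))
  let c := LinearMap.funLeft (MvPolynomial (Fin n) K) (MvPolynomial (Fin n) K)
    (fun j : Prev F.ι (i + 1) => (Sum.inr j : (F.ι (i + 1) ⊕ H.ι (i + 1)) ⊕ Prev F.ι (i + 1)))
  elimL (elimL (F.d i ∘ₗ a + (X x : MvPolynomial (Fin n) K) • c) (H.d i ∘ₗ b + φ i ∘ₗ c))
    (F.prevD i ∘ₗ c)

/-- The augmentation `(a, b) ↦ a - x b` of the mapping cone of `(x, φ) : F(-1) → F ⊕ H(-1)`. -/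
noncomputable def coneAug {I J : Ideal (MvPolynomial (Fin n) K)} (F : Res I) (H : Res J) (x : Fin n) :
    ((F.ι 0 ⊕ H.ι 0) ⊕ Prev F.ι 0 → MvPolynomial (Fin n) K) →ₗ[MvPolynomial (Fin n) K]
      (Unit → MvPolynomial (Fin n) K) :=
  F.aug ∘ₗ LinearMap.funLeft (MvPolynomial (Fin n) K) (MvPolynomial (Fin n) K)
    (fun j => Sum.inl (Sum.inl j)) -
  (X x : MvPolynomial (Fin n) K) •
    H.aug ∘ₗ LinearMap.funLeft (MvPolynomial (Fin n) K) (MvPolynomial (Fin n) K)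
      (fun j => Sum.inl (Sum.inr j))

/-- The element of a free module on a threefold disjoint union with the given components. -/
def triple {ι κ τ : Type} (a : ι → MvPolynomial (Fin n) K) (b : κ → MvPolynomial (Fin n) K)
    (c : τ → MvPolynomial (Fin n) K) : (ι ⊕ κ) ⊕ τ → MvPolynomial (Fin n) K :=
  Sum.elim (Sum.elim a b) c

lemma exists_triple {ι κ τ : Type} (w : (ι ⊕ κ) ⊕ τ → MvPolynomial (Fin n) K) :
    ∃ a b c, w = triple a b c :=
  ⟨fun j => w (Sum.inl (Sum.inl j)), fun j => w (Sum.inl (Sum.inr j)), fun j => w (Sum.inr j), by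
    ext ((j | j) | j) <;> rfl⟩

lemma triple_inj {ι κ τ : Type} {a a' : ι → MvPolynomial (Fin n) K}
    {b b' : κ → MvPolynomial (Fin n) K} {c c' : τ → MvPolynomial (Fin n) K} :
    triple a b c = triple a' b' c' ↔ a = a' ∧ b = b' ∧ c = c' := by
  constructor
  · intro h
    exact ⟨funext fun j => congrFun h (Sum.inl (Sum.inl j)),
      funext fun j => congrFun h (Sum.inl (Sum.inr j)), funext fun j => congrFun h (Sum.inr j)⟩
  · rintro ⟨rfl, rfl, rfl⟩
    rfl

lemma triple_zero {ι κ τ : Type} :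
    (0 : (ι ⊕ κ) ⊕ τ → MvPolynomial (Fin n) K) = triple 0 0 0 := by
  ext ((j | j) | j) <;> rfl

lemma coneD_triple {I J : Ideal (MvPolynomial (Fin n) K)} (F : Res I) (H : Res J) (x : Fin n)
    (φ : ∀ i, (F.ι i → MvPolynomial (Fin n) K) →ₗ[MvPolynomial (Fin n) K]
      (H.ι i → MvPolynomial (Fin n) K)) (i : ℕ) (a : F.ι (i + 1) → MvPolynomial (Fin n) K)
    (b : H.ι (i + 1) → MvPolynomial (Fin n) K) (c : Prev F.ι (i + 1) → MvPolynomial (Fin n) K) :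
    coneD F H x φ i (triple a b c) =
      triple (F.d i a + (X x : MvPolynomial (Fin n) K) • c) (H.d i b + φ i c) (F.prevD i c) := rfl

lemma coneAug_triple {I J : Ideal (MvPolynomial (Fin n) K)} (F : Res I) (H : Res J) (x : Fin n)
    (a : F.ι 0 → MvPolynomial (Fin n) K) (b : H.ι 0 → MvPolynomial (Fin n) K)
    (c : Prev F.ι 0 → MvPolynomial (Fin n) K) :
    coneAug F H x (triple a b c) = F.aug a - (X x : MvPolynomial (Fin n) K) • H.aug b := rfl

lemma DegIn.triple {ι κ τ : Type} {α : ι → ℕ} {β : κ → ℕ} {γ : τ → ℕ} {T : Set ℕ}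
    {a : ι → MvPolynomial (Fin n) K} {b : κ → MvPolynomial (Fin n) K}
    {c : τ → MvPolynomial (Fin n) K} :
    DegIn (Sum.elim (Sum.elim α β) γ) T (triple a b c) ↔
      DegIn α T a ∧ DegIn β T b ∧ DegIn γ T c := by
  constructor
  · intro h
    exact ⟨fun j => h (Sum.inl (Sum.inl j)), fun j => h (Sum.inl (Sum.inr j)),
      fun j => h (Sum.inr j)⟩
  · rintro ⟨h1, h2, h3⟩ ((j | j) | j)
    · exact h1 j
    · exact h2 j
    · exact h3 j

lemma X_smul_cancel {ι : Type} {x : Fin n} {w : ι → MvPolynomial (Fin n) K}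
    (h : (X x : MvPolynomial (Fin n) K) • w = 0) : w = 0 := by
  ext1 j
  have := congrFun h j
  simpa [X_ne_zero] using this

/-- In the mapping cone, a cycle whose last component `c` is a boundary is a boundary. -/
lemma coneD_exact {I J : Ideal (MvPolynomial (Fin n) K)} (F : Res I) (H : Res J) (x : Fin n)
    (φ : ∀ i, (F.ι i → MvPolynomial (Fin n) K) →ₗ[MvPolynomial (Fin n) K]
      (H.ι i → MvPolynomial (Fin n) K))
    (hφ : ∀ i w, H.d i (φ (i + 1) w) = φ i (F.d i w)) (i : ℕ)
    {a : F.ι (i + 1) → MvPolynomial (Fin n) K} {b : H.ι (i + 1) → MvPolynomial (Fin n) K}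
    {c : Prev F.ι (i + 1) → MvPolynomial (Fin n) K} (ha : F.d i a + (X x : MvPolynomial (Fin n) K) • c = 0)
    (hb : H.d i b + φ i c = 0) (hc : ∃ u, F.d i u = c) :
    ∃ u, coneD F H x φ (i + 1) u = triple a b c := by
  obtain ⟨u, rfl⟩ := hc
  obtain ⟨a', ha'⟩ := (F.exact_succ i (a + (X x : MvPolynomial (Fin n) K) • u)).1
    (by rw [map_add, map_smul, ha])
  obtain ⟨b', hb'⟩ := (H.exact_succ i (b + φ (i + 1) u)).1 (by rw [map_add, hφ, hb])
  refine ⟨triple a' b' (-u), ?_⟩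
  rw [coneD_triple, triple_inj]
  refine ⟨by rw [ha', smul_neg, add_neg_cancel_right], by rw [hb', map_neg, add_neg_cancel_right],
    ?_⟩
  simp [Res.prevD]

/-- If `J ⊆ P` and `x` is a nonzerodivisor modulo `J`, then
`0 → J(-1) → J ⊕ P(-1) → J + xP → 0` is exact, the maps being `c ↦ (xc, c)` and
`(a, b) ↦ a - xb`. The mapping cone of a lift of the first one resolves `Q = J + xP`. -/
lemma HasReg.cone {J P Q : Ideal (MvPolynomial (Fin n) K)} {x : Fin n} {r : ℕ}
    (hJ : HasReg J (r + 1)) (hP : HasReg P r) (hJP : J ≤ P)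
    (hx : ∀ f, X x * f ∈ J → f ∈ J) (hQ : ∀ f, f ∈ Q ↔ ∃ a ∈ J, ∃ b ∈ P, f = a + X x * b) :
    HasReg Q (r + 1) := by
  obtain ⟨F, hF⟩ := hJ
  obtain ⟨H, hH⟩ := hP
  obtain ⟨φ, hφh, hφ0, hφ⟩ := F.exists_chainMap H hJP
  refine ⟨{
    ι := fun i => (F.ι i ⊕ H.ι i) ⊕ Prev F.ι i
    fin := fun i => match i with
      | 0 => inferInstanceAs (Fintype ((F.ι 0 ⊕ H.ι 0) ⊕ PEmpty.{1}))
      | i + 1 => inferInstanceAs (Fintype ((F.ι (i + 1) ⊕ H.ι (i + 1)) ⊕ Prev F.ι (i + 1)))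
    len := F.len + H.len + 1
    empty := fun i hi => ?_
    deg := fun i => Sum.elim (Sum.elim (F.deg i) (fun b => H.deg i b + 1)) (F.prevDeg i)
    d := fun i => coneD F H x φ i
    aug := coneAug F H x
    aug_range := fun f => ?_
    exact_zero := fun w => ?_
    exact_succ := fun i w => ?_
    hom_aug := fun T w hw => ?_
    hom_d := fun i T w hw => ?_ }, ?_⟩
  · have h1 := F.empty i (by omega)
    have h2 := H.empty i (by omega)
    have h3 : IsEmpty (Prev F.ι i) := by
      cases i with
      | zero => omega
      | succ i => exact F.empty i (by omega)
    infer_instance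
  · rw [hQ]
    constructor
    · rintro ⟨w, rfl⟩
      obtain ⟨a, b, c, rfl⟩ := exists_triple w
      refine ⟨F.aug a (), (F.aug_range _).1 ⟨a, rfl⟩, -H.aug b (),
        neg_mem ((H.aug_range _).1 ⟨b, rfl⟩), ?_⟩
      erw [coneAug_triple]
      simp [sub_eq_add_neg]
    · rintro ⟨a, ha, b, hb, hf⟩
      obtain ⟨u, hu⟩ := (F.aug_range (fun _ => a)).2 ha
      obtain ⟨v, hv⟩ := (H.aug_range (fun _ => -b)).2 (neg_mem hb)
      refine ⟨triple u v 0, ?_⟩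
      erw [coneAug_triple]
      ext1 j
      rw [hu, hv]
      simp [hf]
  · obtain ⟨a, b, c, rfl⟩ := exists_triple w
    constructor
    · intro h
      erw [coneAug_triple] at h
      have hb : H.aug b () ∈ J := by
        apply hx
        have : X x * H.aug b () = F.aug a () := (sub_eq_zero.1 (congrFun h ())).symm
        rw [this]
        exact (F.aug_range _).1 ⟨a, rfl⟩
      obtain ⟨e, he⟩ := (F.aug_range _).2 hb
      obtain ⟨a', ha'⟩ := (F.exact_zero (a - (X x : MvPolynomial (Fin n) K) • e)).1
        (by rw [map_sub, map_smul, he, h])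
      obtain ⟨b', hb'⟩ := (H.exact_zero (b - φ 0 e)).1 (by rw [map_sub, hφ0, he, sub_self])
      refine ⟨triple a' b' e, ?_⟩
      rw [coneD_triple, triple_inj]
      exact ⟨by rw [ha', sub_add_cancel], by rw [hb', sub_add_cancel],
        funext fun (j : PEmpty) => j.elim⟩
    · rintro ⟨u, hu⟩
      obtain ⟨a', b', e, rfl⟩ := exists_triple u
      rw [coneD_triple, triple_inj] at hu
      obtain ⟨rfl, rfl, -⟩ := hu
      erw [coneAug_triple]
      rw [map_add, map_add, map_smul, F.aug_d, H.aug_d, hφ0, zero_add, zero_add, sub_self]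
  · obtain ⟨a, b, c, rfl⟩ := exists_triple w
    constructor
    · intro h
      rw [coneD_triple, triple_zero, triple_inj] at h
      obtain ⟨ha, hb, hc⟩ := h
      refine coneD_exact F H x φ hφ i ha hb ?_
      cases i with
      | zero =>
        refine (F.exact_zero c).1 (X_smul_cancel (x := x) ?_)
        have := congrArg F.aug ha
        rwa [map_add, F.aug_d, zero_add, map_smul, map_zero] at this
      | succ i => exact (F.exact_succ i c).1 (neg_eq_zero.1 hc)
    · rintro ⟨u, hu⟩
      obtain ⟨a', b', e, rfl⟩ := exists_triple u
      rw [coneD_triple, triple_inj] at hu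
      obtain ⟨rfl, rfl, hc⟩ := hu
      have hc' : c = -F.d i e := hc.symm
      subst hc'
      rw [coneD_triple, triple_zero, triple_inj]
      refine ⟨?_, ?_, ?_⟩
      · rw [map_add, map_smul, F.d_d, zero_add, smul_neg, add_neg_cancel]
      · rw [map_add, H.d_d, hφ, zero_add, map_neg, add_neg_cancel]
      · cases i with
        | zero => rfl
        | succ i => simp [Res.prevD, F.d_d]
  · obtain ⟨a, b, c, rfl⟩ := exists_triple w
    obtain ⟨ha, hb, -⟩ := DegIn.triple.1 hw
    erw [coneAug_triple]
    rw [sub_eq_add_neg]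
    exact (F.hom_aug _ _ ha).add (DegIn.X_smul x (H.hom_aug.shift _ _ hb)).neg
  · obtain ⟨a, b, c, rfl⟩ := exists_triple w
    obtain ⟨ha, hb, hc⟩ := DegIn.triple.1 hw
    rw [coneD_triple]
    refine DegIn.triple.2 ⟨(F.hom_d i _ _ ha).add (DegIn.X_smul x hc),
      ((H.hom_d i).shift _ _ hb).add ((hφh i).shift _ _ hc), ?_⟩
    cases i with
    | zero => exact fun j => PEmpty.elim j
    | succ i => exact ((F.hom_d i).shift _ _ hc).neg
  · rintro i ((j | j) | j)
    · exact hF i j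
    · have := hH i j
      change H.deg i j + 1 ≤ _
      omega
    · cases i with
      | zero => exact PEmpty.elim j
      | succ i =>
        have := hF i j
        change F.deg i j + 1 ≤ _
        omega

end Resolutions

/-! ### From `Res` to the regularity -/

section Conversion

variable {n : ℕ} {K : Type} [Field K]

lemma HasReg.exists_gradedFreeRes {I : Ideal (MvPolynomial (Fin n) K)} {r : ℕ} (h : HasReg I r) :
    ∃ F : GradedFreeRes K I, ∀ i, ∀ a : Fin (F.rank i), F.shift i a ≤ r + i := by
  obtain ⟨F, hF⟩ := h
  let e : ∀ i, F.ι i ≃ Fin (Fintype.card (F.ι i)) := fun i => Fintype.equivFin _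
  let L : ∀ i, (F.ι i → MvPolynomial (Fin n) K) ≃ₗ[MvPolynomial (Fin n) K]
      (Fin (Fintype.card (F.ι i)) → MvPolynomial (Fin n) K) := fun i =>
    LinearEquiv.funCongrLeft (MvPolynomial (Fin n) K) (MvPolynomial (Fin n) K) (e i).symm
  have hL : ∀ i b, DegIn (F.deg i) {F.deg i ((e i).symm b)} ((L i).symm (Pi.single b 1)) := by
    intro i b c m hm
    have := degIn_single (K := K) (n := n) (δ := fun b => F.deg i ((e i).symm b)) b (e i c) m hm
    simpa using this
  refine ⟨{
    len := F.len
    rank := fun i => Fintype.card (F.ι i)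
    rank_zero := fun i hi => ?_
    shift := fun i b => F.deg i ((e i).symm b)
    d := fun i => (L i).toLinearMap ∘ₗ F.d i ∘ₗ (L (i + 1)).symm.toLinearMap
    aug := LinearMap.proj () ∘ₗ F.aug ∘ₗ (L 0).symm.toLinearMap
    aug_range := ?_
    exact_zero := ?_
    exact_succ := fun i => ?_
    homog_aug := fun a => ?_
    homog_d := fun i b a => ?_ }, fun i a => hF i _⟩
  · have := F.empty i hi
    exact Fintype.card_eq_zero
  · ext f
    rw [LinearMap.mem_range]
    constructor
    · rintro ⟨w, rfl⟩
      exact (F.aug_range _).1 ⟨_, rfl⟩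
    · intro hf
      obtain ⟨w, hw⟩ := (F.aug_range (fun _ => f)).2 hf
      exact ⟨L 0 w, by simp [hw]⟩
  · ext w
    rw [LinearMap.mem_ker, LinearMap.mem_range]
    have h1 : (LinearMap.proj () ∘ₗ F.aug ∘ₗ (L 0).symm.toLinearMap) w = 0 ↔
        F.aug ((L 0).symm w) = 0 := ⟨fun h => funext fun _ => h, fun h => congrFun h ()⟩
    rw [h1, F.exact_zero]
    constructor
    · rintro ⟨u, hu⟩
      exact ⟨L 1 u, by simp [hu]⟩
    · rintro ⟨u, rfl⟩
      exact ⟨(L 1).symm u, by simp⟩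
  · ext w
    rw [LinearMap.mem_ker, LinearMap.mem_range]
    have h1 : ((L i).toLinearMap ∘ₗ F.d i ∘ₗ (L (i + 1)).symm.toLinearMap) w = 0 ↔
        F.d i ((L (i + 1)).symm w) = 0 := by simp
    rw [h1, F.exact_succ]
    constructor
    · rintro ⟨u, hu⟩
      exact ⟨L (i + 2) u, by simp [hu]⟩
    · rintro ⟨u, rfl⟩
      exact ⟨(L (i + 2)).symm u, by simp⟩
  · intro m hm
    have := F.hom_aug _ _ (hL 0 a) () m hm
    have h1 : m.degree = Finsupp.weight 1 m := by
      rw [Finsupp.degree_eq_weight_one]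
      rfl
    rw [← h1]
    exact this
  · by_cases h0 : F.d i ((L (i + 1)).symm (Pi.single b 1)) ((e i).symm a) = 0
    · exact Or.inl h0
    · right
      have key := F.hom_d i _ _ (hL (i + 1) b) ((e i).symm a)
      obtain ⟨m, hm⟩ := exists_coeff_ne_zero h0
      have hk := key m hm
      rw [Set.mem_singleton_iff] at hk
      refine ⟨m.degree, by rw [← hk, add_comm], fun m' hm' => ?_⟩
      have hk' := key m' hm'
      rw [Set.mem_singleton_iff] at hk'
      have : m'.degree = m.degree := by omega
      rw [← this, Finsupp.degree_eq_weight_one]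
      rfl

lemma HasReg.reg_le {I : Ideal (MvPolynomial (Fin n) K)} {r : ℕ} (h : HasReg I r) :
    reg K I ≤ r := by
  obtain ⟨F, hF⟩ := h.exists_gradedFreeRes
  have hmem : (r : ℤ) ∈ { r : ℤ | ∃ F : GradedFreeRes K I,
      ∀ i, ∀ a : Fin (F.rank i), (F.shift i a : ℤ) - (i : ℤ) ≤ r } :=
    ⟨F, fun i a => by have := hF i a; omega⟩
  by_cases hb : BddBelow { r : ℤ | ∃ F : GradedFreeRes K I,
      ∀ i, ∀ a : Fin (F.rank i), (F.shift i a : ℤ) - (i : ℤ) ≤ r }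
  · exact csInf_le hb hmem
  -- This happens for `I = 0`; the infimum of a set of integers unbounded below is `0` by convention.
  · rw [reg, Int.csInf_of_not_bddBelow hb]
    exact Int.natCast_nonneg r

end Conversion

/-! ### Monomial ideals -/

section Monomial

variable {n : ℕ} {K : Type} [Field K]

/-- The ideal of polynomials all of whose monomials have their exponent in the upward closed
set `A`. -/
def monoIdeal (K : Type) [Field K] (A : (Fin n →₀ ℕ) → Prop) (hA : ∀ m m', A m → A (m' + m)) :
    Ideal (MvPolynomial (Fin n) K) where
  carrier := {f | ∀ m, coeff m f ≠ 0 → A m}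
  zero_mem' := fun m h => absurd (coeff_zero m) h
  add_mem' := by
    intro f g hf hg m h
    by_cases h1 : coeff m f = 0
    · exact hg m (by simpa [h1] using h)
    · exact hf m h1
  smul_mem' := by
    intro c f hf m h
    obtain ⟨m₁, m₂, rfl, -, h2⟩ := exists_coeff_ne_zero_of_mul h
    exact hA _ _ (hf m₂ h2)

lemma monomial_mem_monoIdeal {A : (Fin n →₀ ℕ) → Prop} {hA : ∀ m m', A m → A (m' + m)}
    {m : Fin n →₀ ℕ} (h : A m) (c : K) : monomial m c ∈ monoIdeal K A hA := by
  intro m' h'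
  rw [coeff_monomial] at h'
  by_cases hm : m = m'
  · exact hm ▸ h
  · exact absurd (if_neg hm) h'

/-- An ideal containing every monomial of a polynomial contains the polynomial. -/
lemma mem_of_monomial_mem {I : Ideal (MvPolynomial (Fin n) K)} {f : MvPolynomial (Fin n) K}
    (h : ∀ m, coeff m f ≠ 0 → monomial m (coeff m f) ∈ I) : f ∈ I := by
  rw [f.as_sum]
  exact sum_mem fun m hm => h m (mem_support_iff.1 hm)

/-- The mapping cone bound for monomial ideals `J ⊆ P` and `Q = J + xP`, in terms of the sets
`A, B, C` of exponents of their monomials. -/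
lemma HasReg.monoIdeal_cone {A B C : (Fin n →₀ ℕ) → Prop} {hA : ∀ m m', A m → A (m' + m)}
    {hB : ∀ m m', B m → B (m' + m)} {hC : ∀ m m', C m → C (m' + m)} {x : Fin n} {r : ℕ}
    (hJ : HasReg (monoIdeal K A hA) (r + 1)) (hP : HasReg (monoIdeal K B hB) r)
    (hAB : ∀ m, A m → B m) (hx : ∀ m, A (Finsupp.single x 1 + m) → A m)
    (hABC : ∀ m, C m ↔ A m ∨ ∃ m', m = Finsupp.single x 1 + m' ∧ B m') :
    HasReg (monoIdeal K C hC) (r + 1) := by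
  refine hJ.cone (x := x) hP (fun f hf m hm => hAB m (hf m hm)) (fun f hf m hm => ?_)
    (fun f => ⟨fun hf => ?_, ?_⟩)
  · exact hx m (hf _ (by rwa [coeff_X_mul]))
  · have hmem : f ∈ monoIdeal K A hA ⊔ Ideal.span {X x} * monoIdeal K B hB := by
      refine mem_of_monomial_mem fun m hm => ?_
      rcases (hABC m).1 (hf m hm) with h | ⟨m', rfl, h⟩
      · exact Ideal.mem_sup_left (monomial_mem_monoIdeal h _)
      · refine Ideal.mem_sup_right (Ideal.mem_span_singleton_mul.2
          ⟨_, monomial_mem_monoIdeal h (coeff (Finsupp.single x 1 + m') f), ?_⟩)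
        rw [X, monomial_mul, one_mul]
    obtain ⟨a, ha, c, hc, rfl⟩ := Submodule.mem_sup.1 hmem
    obtain ⟨b, hb, rfl⟩ := Ideal.mem_span_singleton_mul.1 hc
    exact ⟨a, ha, b, hb, rfl⟩
  · rintro ⟨a, ha, b, hb, rfl⟩
    refine add_mem (fun m hm => (hABC m).2 (Or.inl (ha m hm))) fun m hm => ?_
    obtain ⟨m₁, m₂, rfl, h1, h2⟩ := exists_coeff_ne_zero_of_mul hm
    have h3 : Finsupp.single x 1 = m₁ := by
      by_contra h3
      exact h1 (by rw [coeff_X, if_neg h3])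
    exact (hABC _).2 (Or.inr ⟨m₂, by rw [h3], hb m₂ h2⟩)

end Monomial

/-! ### Ideals generated by variables and edges -/

section Graph

variable {n : ℕ} {K : Type} [Field K] {G : SimpleGraph (Fin n)}

/-- The exponents of the monomials divisible by a variable of `N` or by an edge of the induced
subgraph of `G` on `U`. -/
def EdgeExp (G : SimpleGraph (Fin n)) (N U : Finset (Fin n)) (m : Fin n →₀ ℕ) : Prop :=
  (∃ i ∈ N, m i ≠ 0) ∨ ∃ i ∈ U, ∃ j ∈ U, G.Adj i j ∧ m i ≠ 0 ∧ m j ≠ 0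

lemma EdgeExp.add_left {N U : Finset (Fin n)} (m m' : Fin n →₀ ℕ) (h : EdgeExp G N U m) :
    EdgeExp G N U (m' + m) := by
  rcases h with ⟨i, hi, h⟩ | ⟨i, hi, j, hj, hij, h, h'⟩
  · exact Or.inl ⟨i, hi, by simp [h]⟩
  · exact Or.inr ⟨i, hi, j, hj, hij, by simp [h], by simp [h']⟩

/-- The ideal generated by the variables in `N` and the edge ideal of the induced subgraph of `G`
on `U`. -/
def varEdgeIdeal (K : Type) [Field K] (G : SimpleGraph (Fin n)) (N U : Finset (Fin n)) :
    Ideal (MvPolynomial (Fin n) K) :=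
  monoIdeal K (EdgeExp G N U) EdgeExp.add_left

lemma EdgeExp.cancel {N U : Finset (Fin n)} {x : Fin n} (hN : x ∉ N) (hU : x ∉ U)
    (m : Fin n →₀ ℕ) (h : EdgeExp G N U (Finsupp.single x 1 + m)) : EdgeExp G N U m := by
  have key : ∀ i, i ≠ x → (Finsupp.single x 1 + m : Fin n →₀ ℕ) i = m i := by
    intro i hi
    simp [hi.symm]
  rcases h with ⟨i, hi, h⟩ | ⟨i, hi, j, hj, hij, h, h'⟩
  · exact Or.inl ⟨i, hi, by rwa [key i (fun e => hN (e ▸ hi))] at h⟩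
  · exact Or.inr ⟨i, hi, j, hj, hij, by rwa [key i (fun e => hU (e ▸ hi))] at h,
      by rwa [key j (fun e => hU (e ▸ hj))] at h'⟩

lemma exists_eq_single_add {m : Fin n →₀ ℕ} {x : Fin n} (h : m x ≠ 0) :
    ∃ m', m = Finsupp.single x 1 + m' := by
  refine ⟨m - Finsupp.single x 1, (add_tsub_cancel_of_le ?_).symm⟩
  rw [Finsupp.single_le_iff]
  omega

/-- Adding a new variable to the generators: `J + (y) = J + y · S`. -/
lemma HasReg.insert_var {N U : Finset (Fin n)} {y : Fin n} {r : ℕ} (hN : y ∉ N) (hU : y ∉ U)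
    (h : HasReg (varEdgeIdeal K G N U) (r + 1)) :
    HasReg (varEdgeIdeal K G (insert y N) U) (r + 1) := by
  have htop : HasReg (monoIdeal K (n := n) (fun _ => True) (fun _ _ _ => trivial)) r := by
    have : monoIdeal K (n := n) (fun _ => True) (fun _ _ _ => trivial) = ⊤ :=
      eq_top_iff.2 fun f _ m _ => trivial
    rw [this]
    exact hasReg_top.mono (Nat.zero_le r)
  refine HasReg.monoIdeal_cone (x := y) h htop (fun _ _ => trivial) (EdgeExp.cancel hN hU)
    (fun m => ⟨?_, ?_⟩)
  · rintro (⟨i, hi, h⟩ | h)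
    · rcases Finset.mem_insert.1 hi with rfl | hi
      · obtain ⟨m', hm'⟩ := exists_eq_single_add h
        exact Or.inr ⟨m', hm', trivial⟩
      · exact Or.inl (Or.inl ⟨i, hi, h⟩)
    · exact Or.inl (Or.inr h)
  · rintro ((⟨i, hi, h⟩ | h) | ⟨m', rfl, -⟩)
    · exact Or.inl ⟨i, Finset.mem_insert_of_mem hi, h⟩
    · exact Or.inr h
    · exact Or.inl ⟨y, Finset.mem_insert_self _ _, by simp⟩

lemma HasReg.add_vars {U : Finset (Fin n)} {r : ℕ}
    (h : HasReg (varEdgeIdeal K G ∅ U) (r + 1)) (N : Finset (Fin n)) (hN : Disjoint N U) :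
    HasReg (varEdgeIdeal K G N U) (r + 1) := by
  induction N using Finset.induction_on with
  | empty => exact h
  | insert y N hy ih =>
    rw [Finset.disjoint_insert_left] at hN
    exact (ih hN.2).insert_var hy hN.1

lemma hasReg_of_independent {U : Finset (Fin n)} (hU : ∀ i ∈ U, ∀ j ∈ U, ¬ G.Adj i j) (r : ℕ) :
    HasReg (varEdgeIdeal K G ∅ U) r := by
  have : varEdgeIdeal K G ∅ U = ⊥ := by
    refine eq_bot_iff.2 fun f hf => (Submodule.mem_bot _).2 ?_
    ext m
    by_contra hm
    rcases hf m hm with ⟨i, hi, -⟩ | ⟨i, hi, j, hj, hij, -⟩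
    · exact absurd hi (Finset.notMem_empty i)
    · exact hU i hi j hj hij
  rw [this]
  exact hasReg_bot.mono (Nat.zero_le r)

open Classical in
/-- Splitting off a vertex `x`: the edge ideal `I` of the induced graph on `U` equals
`I(U \ x) + x (I : x)`, and `I : x` is generated by the neighbours of `x` and the edges of
`U \ N[x]`. -/
lemma HasReg.split_vertex {U : Finset (Fin n)} {x : Fin n} {r : ℕ} (hx : x ∈ U)
    (h1 : HasReg (varEdgeIdeal K G ∅ (U.erase x)) (r + 2))
    (h2 : HasReg (varEdgeIdeal K G ∅ {w ∈ U | w ≠ x ∧ ¬ G.Adj x w}) (r + 1)) :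
    HasReg (varEdgeIdeal K G ∅ U) (r + 2) := by
  have hP := h2.add_vars {w ∈ U | G.Adj x w} (by
    rw [Finset.disjoint_left]
    intro w hw hw'
    exact (Finset.mem_filter.1 hw').2.2 (Finset.mem_filter.1 hw).2)
  refine HasReg.monoIdeal_cone (x := x) h1 hP ?_
    (EdgeExp.cancel (Finset.notMem_empty x) (Finset.notMem_erase x U)) ?_
  · rintro m (⟨i, hi, -⟩ | ⟨i, hi, j, hj, hij, hmi, hmj⟩)
    · exact absurd hi (Finset.notMem_empty i)
    rw [Finset.mem_erase] at hi hj
    by_cases hi' : G.Adj x i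
    · exact Or.inl ⟨i, Finset.mem_filter.2 ⟨hi.2, hi'⟩, hmi⟩
    by_cases hj' : G.Adj x j
    · exact Or.inl ⟨j, Finset.mem_filter.2 ⟨hj.2, hj'⟩, hmj⟩
    exact Or.inr ⟨i, Finset.mem_filter.2 ⟨hi.2, hi.1, hi'⟩, j,
      Finset.mem_filter.2 ⟨hj.2, hj.1, hj'⟩, hij, hmi, hmj⟩
  · have key : ∀ m j, j ∈ U → G.Adj x j → m x ≠ 0 → m j ≠ 0 →
        ∃ m', m = Finsupp.single x 1 + m' ∧ EdgeExp G {w ∈ U | G.Adj x w}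
          {w ∈ U | w ≠ x ∧ ¬ G.Adj x w} m' := by
      intro m j hj hxj hmx hmj
      obtain ⟨m', rfl⟩ := exists_eq_single_add hmx
      refine ⟨m', rfl, Or.inl ⟨j, Finset.mem_filter.2 ⟨hj, hxj⟩, ?_⟩⟩
      simpa [Finsupp.single_apply, hxj.ne] using hmj
    intro m
    constructor
    · rintro (⟨i, hi, -⟩ | ⟨i, hi, j, hj, hij, hmi, hmj⟩)
      · exact absurd hi (Finset.notMem_empty i)
      by_cases hix : i = x
      · subst hix
        exact Or.inr (key m j hj hij hmi hmj)
      by_cases hjx : j = x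
      · subst hjx
        exact Or.inr (key m i hi hij.symm hmj hmi)
      exact Or.inl (Or.inr ⟨i, Finset.mem_erase.2 ⟨hix, hi⟩, j, Finset.mem_erase.2 ⟨hjx, hj⟩,
        hij, hmi, hmj⟩)
    · rintro ((⟨i, hi, -⟩ | ⟨i, hi, j, hj, hij, hmi, hmj⟩) |
        ⟨m', rfl, (⟨i, hi, hmi⟩ | ⟨i, hi, j, hj, hij, hmi, hmj⟩)⟩)
      · exact absurd hi (Finset.notMem_empty i)
      · exact Or.inr ⟨i, Finset.mem_of_mem_erase hi, j, Finset.mem_of_mem_erase hj, hij, hmi, hmj⟩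
      · rw [Finset.mem_filter] at hi
        exact Or.inr ⟨x, hx, i, hi.1, hi.2, by simp, by simp [hmi]⟩
      · exact Or.inr ⟨i, (Finset.mem_filter.1 hi).1, j, (Finset.mem_filter.1 hj).1, hij,
          by simp [hmi], by simp [hmj]⟩

lemma varEdgeIdeal_univ : varEdgeIdeal K G ∅ Finset.univ = edgeIdeal K G := by
  apply le_antisymm
  · intro f hf
    refine mem_of_monomial_mem fun m hm => ?_
    rcases hf m hm with ⟨i, hi, -⟩ | ⟨i, -, j, -, hij, hmi, hmj⟩
    · exact absurd hi (Finset.notMem_empty i)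
    obtain ⟨m', rfl⟩ := exists_eq_single_add hmi
    have hmj' : m' j ≠ 0 := by simpa [Finsupp.single_apply, hij.ne] using hmj
    obtain ⟨m'', rfl⟩ := exists_eq_single_add hmj'
    generalize coeff (Finsupp.single i 1 + (Finsupp.single j 1 + m'')) f = c
    have : (monomial (Finsupp.single i 1 + (Finsupp.single j 1 + m'')) c) =
        monomial m'' c * (X i * X j) := by
      rw [X, X, monomial_mul, monomial_mul, one_mul, mul_one, ← add_assoc, add_comm]
    rw [this]
    exact Ideal.mul_mem_left _ _ (Ideal.subset_span ⟨i, j, hij, rfl⟩)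
  · refine Ideal.span_le.2 ?_
    rintro _ ⟨i, j, hij, rfl⟩
    rw [X, X, monomial_mul]
    exact monomial_mem_monoIdeal (Or.inr ⟨i, Finset.mem_univ i, j, Finset.mem_univ j, hij,
      by simp, by simp⟩) _

/-! ### Gap-free and claw-free graphs -/

open Classical in
/-- Edge ideals of split graphs: removing a vertex `b` of the clique leaves a split graph, and
removing its closed neighbourhood leaves part of the independent set. -/
lemma hasReg_of_split {A : Finset (Fin n)} (hA : ∀ i ∈ A, ∀ j ∈ A, ¬ G.Adj i j)
    (B : Finset (Fin n)) (hAB : Disjoint A B) (hB : ∀ i ∈ B, ∀ j ∈ B, i ≠ j → G.Adj i j) :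
    HasReg (varEdgeIdeal K G ∅ (A ∪ B)) 2 := by
  induction B using Finset.induction_on with
  | empty =>
    rw [Finset.union_empty]
    exact hasReg_of_independent hA 2
  | insert b B hb ih =>
    rw [Finset.disjoint_insert_right] at hAB
    refine HasReg.split_vertex (x := b) (r := 0) (by simp) ?_ ?_
    · have : (A ∪ insert b B).erase b = A ∪ B := by
        rw [Finset.union_insert, Finset.erase_insert (by simp [hb, hAB.1])]
      rw [this]
      exact ih hAB.2 fun i hi j hj =>
        hB i (Finset.mem_insert_of_mem hi) j (Finset.mem_insert_of_mem hj)
    · have hsub : ∀ w ∈ ({w ∈ A ∪ insert b B | w ≠ b ∧ ¬ G.Adj b w} : Finset (Fin n)), w ∈ A := by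
        intro w hw
        obtain ⟨hw, hwb, hbw⟩ := Finset.mem_filter.1 hw
        rcases Finset.mem_union.1 hw with h | h
        · exact h
        · exact absurd (hB b (Finset.mem_insert_self b B) w h hwb.symm) hbw
      exact hasReg_of_independent (fun i hi j hj => hA i (hsub i hi) j (hsub j hj)) 1

lemma ClawFree.adj (hclaw : ClawFree 3 G) {z a b c : Fin n} (ha : G.Adj z a) (hb : G.Adj z b)
    (hc : G.Adj z c) (hab : a ≠ b) (hac : a ≠ c) (hbc : b ≠ c) (hab' : ¬ G.Adj a b)
    (hac' : ¬ G.Adj a c) : G.Adj b c := by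
  by_contra hbc'
  have hba' : ¬ G.Adj b a := fun h => hab' h.symm
  have hca' : ¬ G.Adj c a := fun h => hac' h.symm
  have hcb' : ¬ G.Adj c b := fun h => hbc' h.symm
  have hinj : Function.Injective (Sum.elim (fun _ : Fin 1 => z) ![a, b, c]) := by
    rintro (i | i) (j | j) h
    · exact congrArg Sum.inl (Subsingleton.elim i j)
    · fin_cases j
      · exact absurd h ha.ne
      · exact absurd h hb.ne
      · exact absurd h hc.ne
    · fin_cases i
      · exact absurd h ha.ne'
      · exact absurd h hb.ne'
      · exact absurd h hc.ne'
    · fin_cases i <;> fin_cases j <;> simp_all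
  have hadj : ∀ p q, G.Adj (Sum.elim (fun _ : Fin 1 => z) ![a, b, c] p)
      (Sum.elim (fun _ : Fin 1 => z) ![a, b, c] q) ↔
      (completeBipartiteGraph (Fin 1) (Fin 3)).Adj p q := by
    rintro (i | i) (j | j)
    · simp
    · fin_cases j <;> simp [ha, hb, hc]
    · fin_cases i <;> simp [ha.symm, hb.symm, hc.symm]
    · fin_cases i <;> fin_cases j <;> simp [hab', hac', hbc', hba', hca', hcb']
  exact hclaw.false ⟨⟨_, hinj⟩, fun {p q} => hadj p q⟩

open Classical in
/-- If `xz` is an edge of a gap-free and claw-free graph, the graph outside the closed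
neighbourhood of `x` is split: the neighbours of `z` form a clique (otherwise there is a claw
centred at `z`), and its non-neighbours form an independent set (otherwise there is a gap). -/
lemma hasReg_compl_closedNeighborhood (hgap : GapFree G) (hclaw : ClawFree 3 G)
    (U : Finset (Fin n)) {x z : Fin n} (hxz : G.Adj x z) :
    HasReg (varEdgeIdeal K G ∅ {w ∈ U | w ≠ x ∧ ¬ G.Adj x w}) 2 := by
  set W : Finset (Fin n) := {w ∈ U | w ≠ x ∧ ¬ G.Adj x w} with hW
  have hmem : ∀ w ∈ W, w ≠ x ∧ ¬ G.Adj x w := fun w hw => (Finset.mem_filter.1 hw).2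
  have hunion : W = {w ∈ W | ¬ G.Adj z w} ∪ {w ∈ W | G.Adj z w} := by
    rw [Finset.union_comm, Finset.filter_union_filter_not_eq]
  rw [hunion]
  refine hasReg_of_split ?_ _ ?_ ?_
  · intro i hi j hj hij
    obtain ⟨hiW, hzi⟩ := Finset.mem_filter.1 hi
    obtain ⟨hjW, hzj⟩ := Finset.mem_filter.1 hj
    obtain ⟨hix, hxi⟩ := hmem i hiW
    obtain ⟨hjx, hxj⟩ := hmem j hjW
    exact hgap ⟨x, z, i, j, hxz, hij, hix.symm, hjx.symm, fun h => hxi (h ▸ hxz),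
      fun h => hxj (h ▸ hxz), hxi, hxj, hzi, hzj⟩
  · rw [Finset.disjoint_left]
    intro w hw hw'
    exact (Finset.mem_filter.1 hw).2 (Finset.mem_filter.1 hw').2
  · intro i hi j hj hij
    obtain ⟨hiW, hzi⟩ := Finset.mem_filter.1 hi
    obtain ⟨hjW, hzj⟩ := Finset.mem_filter.1 hj
    obtain ⟨hix, hxi⟩ := hmem i hiW
    obtain ⟨hjx, hxj⟩ := hmem j hjW
    exact hclaw.adj hxz.symm hzi hzj hix.symm hjx.symm hij hxi hxj

lemma hasReg_of_gapFree_clawFree (hgap : GapFree G) (hclaw : ClawFree 3 G)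
    (U : Finset (Fin n)) : HasReg (varEdgeIdeal K G ∅ U) 3 := by
  induction U using Finset.strongInduction with
  | H U ih =>
    by_cases h : ∃ x ∈ U, ∃ z ∈ U, G.Adj x z
    · obtain ⟨x, hx, z, -, hxz⟩ := h
      exact HasReg.split_vertex hx (ih _ (Finset.erase_ssubset hx))
        (hasReg_compl_closedNeighborhood hgap hclaw U hxz)
    · push Not at h
      exact hasReg_of_independent h 3

end Graph

/-- If `G` is gap-free and claw-free, then `reg I(G) ≤ 3`. -/
theorem regularity_le_three_of_gapFree_clawFree {n : ℕ} (K : Type) [Field K]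
    (G : SimpleGraph (Fin n)) (hgap : GapFree G) (hclaw : ClawFree 3 G) :
    reg K (edgeIdeal K G) ≤ 3 := by
  rw [← varEdgeIdeal_univ]
  exact (hasReg_of_gapFree_clawFree hgap hclaw Finset.univ).reg_le
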